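/- arXiv:1807.04948 — 5 statements merged into one kernel-verified Lean document; each statement's English description precedes it below -/
import Mathlib

section
/- Let n ≥ 1, let V be a 2n×n complex matrix of rank n, and let T be an invertible 2n×2n complex matrix such that span(T⁻¹ V) ≠ span(V). Then there is at most one index i ∈ {1, …, n} for which span(T⁻¹ V_{i'}) ⊆ span(V). (This is Theorem 1 of the paper: for a full-rank 2n×n beamforming matrix V and a generic channel product matrix T — whose genericity precisely guarantees that span(V) is not T⁻¹-invariant — only one column of V can be chosen as the very strong interference stream.) -/
/-!
If two distinct indices were admissible, every column of `T⁻¹ V` would survive one of the two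
deletions, so `span(T⁻¹ V) ⊆ span V`. Since `T⁻¹` is invertible, both spans have dimension
`rank V`, hence they coincide, against the genericity hypothesis.
-/

/-- The column space of a complex matrix: the `ℂ`-linear span of its columns. -/
noncomputable def colSpan {m n : ℕ} (M : Matrix (Fin m) (Fin n) ℂ) :
    Submodule ℂ (Fin m → ℂ) :=
  Submodule.span ℂ (Set.range fun j : Fin n => fun i : Fin m => M i j)

/-- The span of the columns of `M` with the `i`-th column deleted. -/
noncomputable def colSpanDel {m n : ℕ} (M : Matrix (Fin m) (Fin n) ℂ) (i : Fin n) :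
    Submodule ℂ (Fin m → ℂ) :=
  Submodule.span ℂ ((fun j : Fin n => fun k : Fin m => M k j) '' {i}ᶜ)

/-- Theorem 1 of the paper: if `V` is a full-rank `2n × n` complex
matrix and `T` an invertible `2n × 2n` complex matrix such that
`span(T⁻¹ V) ≠ span V` (genericity of the channel product matrix), then at most one
index `i` satisfies `span(T⁻¹ V_{i'}) ⊆ span V`: only one column of `V` can be
chosen as the very strong interference stream. -/
theorem at_most_one_strong_column (n : ℕ) (hn : 1 ≤ n)
    (V : Matrix (Fin (2 * n)) (Fin n) ℂ) (hV : V.rank = n)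
    (T : Matrix (Fin (2 * n)) (Fin (2 * n)) ℂ) (hT : IsUnit T.det)
    (hgen : colSpan (T⁻¹ * V) ≠ colSpan V) :
    ∀ i₁ i₂ : Fin n,
      colSpanDel (T⁻¹ * V) i₁ ≤ colSpan V →
      colSpanDel (T⁻¹ * V) i₂ ≤ colSpan V → i₁ = i₂ := by
  intro i₁ i₂ h₁ h₂
  by_contra hne
  apply hgen
  have hle : colSpan (T⁻¹ * V) ≤ colSpan V := by
    refine Submodule.span_le.2 ?_
    rintro _ ⟨j, rfl⟩
    by_cases hj : j = i₁
    · exact h₂ (Submodule.subset_span ⟨j, fun h => hne (hj.symm.trans h), rfl⟩)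
    · exact h₁ (Submodule.subset_span ⟨j, hj, rfl⟩)
  refine Submodule.eq_of_le_of_finrank_eq hle ?_
  have hrank : (T⁻¹ * V).rank = V.rank :=
    Matrix.rank_mul_eq_right_of_isUnit_det _ _ (Matrix.isUnit_nonsing_inv_det T hT)
  rw [Matrix.rank_eq_finrank_span_cols, Matrix.rank_eq_finrank_span_cols] at hrank
  exact hrank
end

section
/- Let n ≥ 1 and for i, j ∈ {1, 2, 3} let H^{[ij]} be invertible diagonal 2n×2n complex matrices, and let V^{[1]}, V^{[2]}, V^{[3]} be 2n×n complex matrices satisfying the interference alignment conditions span(H^{[12]} V^{[2]}) = span(H^{[13]} V^{[3]}), span(H^{[21]} V^{[1]}) = span(H^{[23]} V^{[3]}), and span(H^{[31]} V^{[1]}) = span(H^{[32]} V^{[2]}). Then span(V^{[1]}) = span(T V^{[1]}), where T = (H^{[13]})⁻¹ H^{[23]} (H^{[21]})⁻¹ H^{[12]} (H^{[32]})⁻¹ H^{[31]}. -/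
lemma colSpan_mul {l m n : ℕ} (M : Matrix (Fin l) (Fin m) ℂ) (A : Matrix (Fin m) (Fin n) ℂ) :
    colSpan (M * A) = (colSpan A).map M.mulVecLin := by
  unfold colSpan
  rw [Submodule.map_span, ← Set.range_comp]
  rfl

lemma colSpan_mul_congr {l m n p : ℕ} (M : Matrix (Fin l) (Fin m) ℂ)
    {A : Matrix (Fin m) (Fin n) ℂ} {B : Matrix (Fin m) (Fin p) ℂ} (h : colSpan A = colSpan B) :
    colSpan (M * A) = colSpan (M * B) := by
  rw [colSpan_mul, colSpan_mul, h]

lemma commute_of_isDiag {m : ℕ} {A B : Matrix (Fin m) (Fin m) ℂ} (hA : A.IsDiag)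
    (hB : B.IsDiag) : Commute A B := by
  rw [← hA.diagonal_diag, ← hB.diagonal_diag]
  exact Matrix.commute_diagonal _ _

lemma commute_inv_of_isDiag {m : ℕ} {A B : Matrix (Fin m) (Fin m) ℂ} (hA : A.IsDiag)
    (hB : B.IsDiag) : Commute A B⁻¹ := by
  rw [← hA.diagonal_diag, ← hB.diagonal_diag, Matrix.inv_diagonal]
  exact Matrix.commute_diagonal _ _

/-- For the 3-user interference channel with invertible diagonal
`2n × 2n` extended channel matrices `H i j` (receiver `i`, transmitter `j`,
0-indexed) and `2n × n` beamforming matrices `V j` satisfying the interference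
alignment conditions
`span(H^{[12]} V^{[2]}) = span(H^{[13]} V^{[3]})`,
`span(H^{[21]} V^{[1]}) = span(H^{[23]} V^{[3]})`,
`span(H^{[31]} V^{[1]}) = span(H^{[32]} V^{[2]})`,
one has `span(V^{[1]}) = span(T V^{[1]})` with
`T = (H^{[13]})⁻¹ H^{[23]} (H^{[21]})⁻¹ H^{[12]} (H^{[32]})⁻¹ H^{[31]}`. -/
theorem ia_forces_T_invariance (n : ℕ) (hn : 1 ≤ n)
    (H : Fin 3 → Fin 3 → Matrix (Fin (2 * n)) (Fin (2 * n)) ℂ)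
    (hdiag : ∀ i j, (H i j).IsDiag) (hinv : ∀ i j, IsUnit (H i j).det)
    (V : Fin 3 → Matrix (Fin (2 * n)) (Fin n) ℂ)
    (hIA1 : colSpan (H 0 1 * V 1) = colSpan (H 0 2 * V 2))
    (hIA2 : colSpan (H 1 0 * V 0) = colSpan (H 1 2 * V 2))
    (hIA3 : colSpan (H 2 0 * V 0) = colSpan (H 2 1 * V 1)) :
    colSpan (V 0) =
      colSpan ((H 0 2)⁻¹ * H 1 2 * (H 1 0)⁻¹ * H 0 1 * (H 2 1)⁻¹ * H 2 0 * V 0) := by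
  have hcomm : (H 0 2)⁻¹ * H 1 2 * (H 1 0)⁻¹ * H 0 2 = (H 1 0)⁻¹ * H 1 2 := by
    have h1 := (commute_inv_of_isDiag (hdiag 0 2) (hdiag 1 0)).eq
    have h2 := (commute_of_isDiag (hdiag 0 2) (hdiag 1 2)).eq
    have h3 := (commute_inv_of_isDiag (hdiag 1 2) (hdiag 1 0)).eq
    calc (H 0 2)⁻¹ * H 1 2 * (H 1 0)⁻¹ * H 0 2
        = (H 0 2)⁻¹ * (H 1 2 * ((H 1 0)⁻¹ * H 0 2)) := by simp only [Matrix.mul_assoc]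
      _ = (H 0 2)⁻¹ * (H 0 2 * (H 1 2 * (H 1 0)⁻¹)) := by
          rw [← h1, ← Matrix.mul_assoc (H 1 2), ← h2, Matrix.mul_assoc (H 0 2)]
      _ = (H 1 0)⁻¹ * H 1 2 := by
          rw [Matrix.nonsing_inv_mul_cancel_left _ _ (hinv 0 2), h3]
  symm
  calc colSpan ((H 0 2)⁻¹ * H 1 2 * (H 1 0)⁻¹ * H 0 1 * (H 2 1)⁻¹ * H 2 0 * V 0)
      = colSpan ((H 0 2)⁻¹ * H 1 2 * (H 1 0)⁻¹ * H 0 1 * (H 2 1)⁻¹ * (H 2 1 * V 1)) := by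
        rw [Matrix.mul_assoc _ (H 2 0)]
        exact colSpan_mul_congr _ hIA3
    _ = colSpan ((H 0 2)⁻¹ * H 1 2 * (H 1 0)⁻¹ * (H 0 1 * V 1)) := by
        rw [Matrix.mul_assoc _ (H 2 1)⁻¹, Matrix.nonsing_inv_mul_cancel_left _ _ (hinv 2 1),
          Matrix.mul_assoc _ (H 0 1)]
    _ = colSpan ((H 0 2)⁻¹ * H 1 2 * (H 1 0)⁻¹ * (H 0 2 * V 2)) := colSpan_mul_congr _ hIA1
    _ = colSpan ((H 1 0)⁻¹ * (H 1 2 * V 2)) := by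
        rw [← Matrix.mul_assoc _ (H 0 2), hcomm, Matrix.mul_assoc]
    _ = colSpan ((H 1 0)⁻¹ * (H 1 0 * V 0)) := colSpan_mul_congr _ hIA2.symm
    _ = colSpan (V 0) := by rw [Matrix.nonsing_inv_mul_cancel_left _ _ (hinv 1 0)]
end

section
/- Let n ≥ 1 and for i, j ∈ {1, 2, 3} let H^{[ij]} be invertible diagonal 2n×2n complex matrices, and let V^{[1]}, V^{[2]}, V^{[3]} be 2n×n complex matrices with V^{[1]} ≠ 0 satisfying span(H^{[12]} V^{[2]}) = span(H^{[13]} V^{[3]}), span(H^{[21]} V^{[1]}) = span(H^{[23]} V^{[3]}), and span(H^{[31]} V^{[1]}) = span(H^{[32]} V^{[2]}). Suppose the diagonal matrix T = (H^{[13]})⁻¹ H^{[23]} (H^{[21]})⁻¹ H^{[12]} (H^{[32]})⁻¹ H^{[31]} has pairwise distinct diagonal entries. Then there exists an index k such that the standard basis vector e_k belongs to both span(H^{[11]} V^{[1]}) and span(H^{[12]} V^{[2]}); in particular, the desired-signal subspace span(H^{[11]} V^{[1]}) and the interference subspace span(H^{[12]} V^{[2]}) at receiver 1 have nontrivial intersection,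 so receiver 1 cannot recover its signal by zero-forcing the interference. -/
lemma mul_mem_colSpan_diagonal_mul {m n : ℕ} (d : Fin m → ℂ) (M : Matrix (Fin m) (Fin n) ℂ)
    {x : Fin m → ℂ} (hx : x ∈ colSpan M) : d * x ∈ colSpan (Matrix.diagonal d * M) := by
  unfold colSpan at hx
  induction hx using Submodule.span_induction with
  | mem x hx =>
    obtain ⟨j, rfl⟩ := hx
    refine Submodule.subset_span ⟨j, ?_⟩
    ext i
    simp [Matrix.diagonal_mul]
  | zero => simp
  | add x y _ _ hx hy => rw [mul_add]; exact add_mem hx hy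
  | smul a x _ hx => rw [mul_smul_comm]; exact Submodule.smul_mem _ a hx

lemma inv_mul_mem_colSpan {m n : ℕ} {d : Fin m → ℂ} (hd : ∀ i, d i ≠ 0)
    (M : Matrix (Fin m) (Fin n) ℂ) {x : Fin m → ℂ}
    (hx : x ∈ colSpan (Matrix.diagonal d * M)) : d⁻¹ * x ∈ colSpan M := by
  have h := mul_mem_colSpan_diagonal_mul d⁻¹ _ hx
  have h1 : (fun i => d⁻¹ i * d i) = fun _ => 1 := by
    ext i
    simp [hd i]
  rwa [← Matrix.mul_assoc, Matrix.diagonal_mul_diagonal, h1, Matrix.diagonal_one,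
    Matrix.one_mul] at h

lemma inv_diagonal_of_ne_zero {m : ℕ} {d : Fin m → ℂ} (hd : ∀ i, d i ≠ 0) :
    (Matrix.diagonal d)⁻¹ = Matrix.diagonal d⁻¹ := by
  apply Matrix.inv_eq_left_inv
  have h1 : (fun i => d⁻¹ i * d i) = fun _ => 1 := by
    ext i
    simp [hd i]
  rw [Matrix.diagonal_mul_diagonal, h1, Matrix.diagonal_one]

/-- A nonzero subspace invariant under a diagonal operator with distinct diagonal entries contains
a standard basis vector. -/
lemma exists_single_mem_of_mul_mem {m : ℕ} {t : Fin m → ℂ} (ht : Function.Injective t)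
    {S : Submodule ℂ (Fin m → ℂ)} (hS : ∀ x ∈ S, t * x ∈ S) (hne : S ≠ ⊥) :
    ∃ k, (Pi.single k 1 : Fin m → ℂ) ∈ S := by
  obtain ⟨x, hx, hx0⟩ := S.ne_bot_iff.1 hne
  obtain ⟨k, hk⟩ := Function.ne_iff.1 hx0
  have key : ∀ s : Finset (Fin m), (fun i => (∏ j ∈ s, (t i - t j)) * x i) ∈ S := by
    intro s
    induction s using Finset.induction_on with
    | empty => simpa using hx
    | insert a s ha ih =>
      convert sub_mem (hS _ ih) (S.smul_mem (t a) ih) using 1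
      ext i
      simp only [Finset.prod_insert ha, Pi.sub_apply, Pi.mul_apply, Pi.smul_apply, smul_eq_mul]
      ring
  -- The Lagrange product over all `j ≠ k` kills every coordinate of `x` except the `k`-th.
  set c := (∏ j ∈ Finset.univ.erase k, (t k - t j)) * x k with hc
  have hc0 : c ≠ 0 := by
    refine mul_ne_zero (Finset.prod_ne_zero_iff.2 fun j hj => sub_ne_zero.2 fun h => ?_) hk
    exact (Finset.mem_erase.1 hj).1 (ht h).symm
  refine ⟨k, ?_⟩
  convert S.smul_mem c⁻¹ (key (Finset.univ.erase k)) using 1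
  ext i
  by_cases hi : i = k
  · subst hi
    simp [← hc, hc0]
  · have h0 : ∏ j ∈ Finset.univ.erase k, (t i - t j) = 0 :=
      Finset.prod_eq_zero (i := i) (by simp [hi]) (sub_self _)
    simp [hi, h0]

/-- Membership of `e_k` in a subspace follows from that of any rescaling of `e_k` by a nowhere
vanishing vector. -/
lemma single_mem_of_mul_single_mem {m : ℕ} {d : Fin m → ℂ} (hd : ∀ i, d i ≠ 0)
    {S : Submodule ℂ (Fin m → ℂ)} {k : Fin m} (h : d * (Pi.single k 1 : Fin m → ℂ) ∈ S) :
    (Pi.single k 1 : Fin m → ℂ) ∈ S := by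
  convert S.smul_mem (d k)⁻¹ h using 1
  ext i
  by_cases hi : i = k
  · subst hi
    simp [hd i]
  · simp [hi]

/-- For the 3-user interference channel with invertible diagonal
`2n × 2n` extended channel matrices `H i j` (receiver `i`, transmitter `j`,
0-indexed), nonzero `V^{[1]}`, beamforming matrices satisfying the alignment
conditions of the paper, and the diagonal product matrix
`T = (H^{[13]})⁻¹ H^{[23]} (H^{[21]})⁻¹ H^{[12]} (H^{[32]})⁻¹ H^{[31]}`
having pairwise distinct diagonal entries, some standard basis vector `e_k`
belongs to both `span(H^{[11]} V^{[1]})` and `span(H^{[12]} V^{[2]})`; in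
particular these two subspaces intersect nontrivially, so receiver 1 cannot
recover its signal by zero-forcing the interference. -/
theorem desired_signal_not_independent_of_interference (n : ℕ) (hn : 1 ≤ n)
    (H : Fin 3 → Fin 3 → Matrix (Fin (2 * n)) (Fin (2 * n)) ℂ)
    (hdiag : ∀ i j, (H i j).IsDiag) (hinv : ∀ i j, IsUnit (H i j).det)
    (V : Fin 3 → Matrix (Fin (2 * n)) (Fin n) ℂ)
    (hV1ne : V 0 ≠ 0)
    (hIA1 : colSpan (H 0 1 * V 1) = colSpan (H 0 2 * V 2))
    (hIA2 : colSpan (H 1 0 * V 0) = colSpan (H 1 2 * V 2))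
    (hIA3 : colSpan (H 2 0 * V 0) = colSpan (H 2 1 * V 1))
    (hdist : Function.Injective fun k : Fin (2 * n) =>
      ((H 0 2)⁻¹ * H 1 2 * (H 1 0)⁻¹ * H 0 1 * (H 2 1)⁻¹ * H 2 0) k k) :
    (∃ k : Fin (2 * n),
        (Pi.single k 1 : Fin (2 * n) → ℂ) ∈ colSpan (H 0 0 * V 0) ∧
        (Pi.single k 1 : Fin (2 * n) → ℂ) ∈ colSpan (H 0 1 * V 1)) ∧
      colSpan (H 0 0 * V 0) ⊓ colSpan (H 0 1 * V 1) ≠ ⊥ := by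
  obtain ⟨d, rfl⟩ : ∃ d : Fin 3 → Fin 3 → Fin (2 * n) → ℂ,
      H = fun i j => Matrix.diagonal (d i j) :=
    ⟨fun i j => (H i j).diag, by ext1 i; ext1 j; exact (hdiag i j).diagonal_diag.symm⟩
  have hd : ∀ i j k, d i j k ≠ 0 := by
    intro i j k
    have h := (hinv i j).ne_zero
    rw [Matrix.det_diagonal] at h
    exact Finset.prod_ne_zero_iff.1 h k (Finset.mem_univ k)
  beta_reduce at *
  have hdinv : ∀ i j k, (d i j)⁻¹ k ≠ 0 := fun i j k => inv_ne_zero (hd i j k)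
  have hT : ∀ x ∈ colSpan (V 0),
      ((d 0 2)⁻¹ * d 1 2 * (d 1 0)⁻¹ * d 0 1 * (d 2 1)⁻¹ * d 2 0) * x ∈ colSpan (V 0) := by
    intro x hx
    have h1 := mul_mem_colSpan_diagonal_mul (d 2 0) _ hx
    rw [hIA3] at h1
    have h2 := mul_mem_colSpan_diagonal_mul (d 0 1) _ (inv_mul_mem_colSpan (hd 2 1) _ h1)
    rw [hIA1] at h2
    have h3 := mul_mem_colSpan_diagonal_mul (d 1 2) _ (inv_mul_mem_colSpan (hd 0 2) _ h2)
    rw [← hIA2] at h3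
    convert inv_mul_mem_colSpan (hd 1 0) _ h3 using 1
    ring
  have hne : colSpan (V 0) ≠ ⊥ := by
    intro h
    apply hV1ne
    ext i j
    have hj : (fun i => V 0 i j) ∈ colSpan (V 0) := Submodule.subset_span ⟨j, rfl⟩
    rw [h, Submodule.mem_bot] at hj
    exact congrFun hj i
  have hinj : Function.Injective
      ((d 0 2)⁻¹ * d 1 2 * (d 1 0)⁻¹ * d 0 1 * (d 2 1)⁻¹ * d 2 0) := by
    intro a b hab
    apply hdist
    simpa [inv_diagonal_of_ne_zero (hd _ _), Matrix.diagonal_mul_diagonal] using hab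
  obtain ⟨k, hk⟩ := exists_single_mem_of_mul_mem hinj hT hne
  have hk0 := single_mem_of_mul_single_mem (hd 0 0) (mul_mem_colSpan_diagonal_mul (d 0 0) _ hk)
  have h20 := mul_mem_colSpan_diagonal_mul (d 2 0) _ hk
  rw [hIA3] at h20
  have hS1 := single_mem_of_mul_single_mem (hdinv 2 1)
    (inv_mul_mem_colSpan (hd 2 1) _ (single_mem_of_mul_single_mem (hd 2 0) h20))
  have hk1 := single_mem_of_mul_single_mem (hd 0 1) (mul_mem_colSpan_diagonal_mul (d 0 1) _ hS1)
  refine ⟨⟨k, hk0, hk1⟩, (Submodule.ne_bot_iff _).2 ⟨_, ⟨hk0, hk1⟩, ?_⟩⟩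
  simp
end

section
/- Let n ≥ 1, for i, j ∈ {1, 2, 3} let H^{[ij]} be invertible diagonal 2n×2n complex matrices, let T = (H^{[13]})⁻¹ H^{[23]} (H^{[21]})⁻¹ H^{[12]} (H^{[32]})⁻¹ H^{[31]}, let w ∈ ℂ^{2n}, and define V^{[3]} = [w, Tw, …, T^{n−1}w], V^{[2]} = (H^{[12]})⁻¹ H^{[13]} V^{[3]}, and V^{[1]} = (H^{[31]})⁻¹ H^{[32]} V^{[2]}. Then span(H^{[12]} V^{[2]}) = span(H^{[13]} V^{[3]}), span(H^{[31]} V^{[1]}) = span(H^{[32]} V^{[2]}), and there exists an index i ∈ {1, …, n} (namely the index of the removed strong stream) such that span(H^{[23]} V^{[3]}_{i'}) ⊆ span(H^{[21]} V^{[1]}); i.e., the constructed beamforming matrices satisfy all the strong interference alignment requirements. -/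
/-- An invertible diagonal matrix, with its inverse, in terms of nonvanishing diagonal
entries. -/
lemma exists_diagonal_of_isDiag {m : ℕ} {M : Matrix (Fin m) (Fin m) ℂ} (hM : M.IsDiag)
    (hu : IsUnit M.det) :
    ∃ d : Fin m → ℂ, (∀ k, d k ≠ 0) ∧ M = Matrix.diagonal d ∧
      M⁻¹ = Matrix.diagonal (fun k => (d k)⁻¹) := by
  have hMd : M = Matrix.diagonal M.diag := hM.diagonal_diag.symm
  have hd : ∀ k, M.diag k ≠ 0 := by
    rw [hMd, Matrix.det_diagonal, isUnit_iff_ne_zero, Finset.prod_ne_zero_iff] at hu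
    exact fun k => hu k (Finset.mem_univ k)
  refine ⟨M.diag, hd, hMd, Matrix.inv_eq_right_inv ?_⟩
  conv_lhs => rw [hMd]
  rw [Matrix.diagonal_mul_diagonal, ← Matrix.diagonal_one]
  congr 1
  funext k
  simpa using mul_inv_cancel₀ (hd k)

/-- The identity `A T = H^{[23]}`: since diagonal matrices commute, every factor of `T` other than
`H^{[23]}` is cancelled by a factor of `A`. -/
lemma align_mul_eq {m : ℕ} (H : Fin 3 → Fin 3 → Matrix (Fin m) (Fin m) ℂ)
    (hdiag : ∀ i j, (H i j).IsDiag) (hinv : ∀ i j, IsUnit (H i j).det) :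
    (H 1 0 * ((H 2 0)⁻¹ * H 2 1 * ((H 0 1)⁻¹ * H 0 2))) *
      ((H 0 2)⁻¹ * H 1 2 * (H 1 0)⁻¹ * H 0 1 * (H 2 1)⁻¹ * H 2 0) = H 1 2 := by
  choose d hd hH hI using fun i j => exists_diagonal_of_isDiag (hdiag i j) (hinv i j)
  simp only [hI]
  simp only [hH, Matrix.diagonal_mul_diagonal]
  congr 1
  funext k
  have h02 := hd 0 2 k
  have h10 := hd 1 0 k
  have h01 := hd 0 1 k
  have h21 := hd 2 1 k
  have h20 := hd 2 0 k
  field_simp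

lemma col_mul {l m n : ℕ} (M : Matrix (Fin l) (Fin m) ℂ) (V : Matrix (Fin m) (Fin n) ℂ)
    (j : Fin n) : (fun k => (M * V) k j) = M.mulVec (fun k => V k j) := rfl

/-- With invertible diagonal `2n × 2n` channel matrices `H i j`
(receiver `i`, transmitter `j`, 0-indexed),
`T = (H^{[13]})⁻¹ H^{[23]} (H^{[21]})⁻¹ H^{[12]} (H^{[32]})⁻¹ H^{[31]}`, and the
constructed beamforming matrices `V^{[3]} = [w, Tw, …, T^{n-1}w]`,
`V^{[2]} = (H^{[12]})⁻¹ H^{[13]} V^{[3]}`, `V^{[1]} = (H^{[31]})⁻¹ H^{[32]} V^{[2]}`,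
the strong interference alignment requirements hold:
`span(H^{[12]} V^{[2]}) = span(H^{[13]} V^{[3]})`,
`span(H^{[31]} V^{[1]}) = span(H^{[32]} V^{[2]})`, and for some stream index `i`
(the removed very strong stream) `span(H^{[23]} V^{[3]}_{i'}) ⊆ span(H^{[21]} V^{[1]})`. -/
theorem constructed_beamformers_satisfy_strong_ia (n : ℕ) (hn : 1 ≤ n)
    (H : Fin 3 → Fin 3 → Matrix (Fin (2 * n)) (Fin (2 * n)) ℂ)
    (hdiag : ∀ i j, (H i j).IsDiag) (hinv : ∀ i j, IsUnit (H i j).det)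
    (w : Fin (2 * n) → ℂ)
    (V3 V2 V1 : Matrix (Fin (2 * n)) (Fin n) ℂ)
    (hV3 : ∀ j : Fin n, (fun i => V3 i j) =
      (((H 0 2)⁻¹ * H 1 2 * (H 1 0)⁻¹ * H 0 1 * (H 2 1)⁻¹ * H 2 0) ^ (j : ℕ)).mulVec w)
    (hV2 : V2 = (H 0 1)⁻¹ * H 0 2 * V3)
    (hV1 : V1 = (H 2 0)⁻¹ * H 2 1 * V2) :
    colSpan (H 0 1 * V2) = colSpan (H 0 2 * V3) ∧
    colSpan (H 2 0 * V1) = colSpan (H 2 1 * V2) ∧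
    ∃ i : Fin n, colSpanDel (H 1 2 * V3) i ≤ colSpan (H 1 0 * V1) := by
  refine ⟨?_, ?_, ⟨n - 1, by omega⟩, ?_⟩
  · rw [hV2, Matrix.mul_assoc, Matrix.mul_nonsing_inv_cancel_left _ _ (hinv 0 1)]
  · rw [hV1, Matrix.mul_assoc, Matrix.mul_nonsing_inv_cancel_left _ _ (hinv 2 0)]
  · refine Submodule.span_le.2 ?_
    rintro _ ⟨j, hj, rfl⟩
    have hj' : (j : ℕ) + 1 < n := by
      have h : (j : ℕ) ≠ n - 1 := fun h => hj (Fin.ext h)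
      omega
    refine Submodule.subset_span ⟨⟨j + 1, hj'⟩, ?_⟩
    have hA : H 1 0 * V1 = (H 1 0 * ((H 2 0)⁻¹ * H 2 1 * ((H 0 1)⁻¹ * H 0 2))) * V3 := by
      rw [hV1, hV2]
      simp only [Matrix.mul_assoc]
    simp only [hA, col_mul, hV3]
    rw [pow_succ', Matrix.mulVec_mulVec, Matrix.mulVec_mulVec,
      ← Matrix.mul_assoc _ _ (_ ^ (j : ℕ)), align_mul_eq H hdiag hinv]
end

section
/- Let n ≥ 1, let T be a 2n×2n complex diagonal matrix whose diagonal entries are pairwise distinct and nonzero, and let w ∈ ℂ^{2n} be a vector all of whose entries are nonzero. Then the 2n×n matrix V = [w, Tw, T²w, …, T^{n−1}w] has rank n (full column rank). -/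
/-!
Entrywise `V i j = w i * d i ^ j`, so any `n` rows of `V` form the product of a diagonal matrix
with nonzero entries and a square Vandermonde matrix with distinct nodes. Such a block is
invertible (`Matrix.det_vandermonde_ne_zero_iff`), hence `V` has rank at least `n`, and it has only
`n` columns.
-/

/-- If `T = diagonal d` is a `2n × 2n` complex diagonal matrix with
pairwise distinct nonzero diagonal entries and `w ∈ ℂ^{2n}` has no zero entry,
then the `2n × n` matrix `V = [w, Tw, …, T^{n-1}w]` (the `j`-th column of `V`
is `T^j w`, 0-indexed) has full column rank `n`. -/
theorem power_beamformer_full_rank (n : ℕ) (hn : 1 ≤ n)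
    (d : Fin (2 * n) → ℂ) (hd : Function.Injective d) (hd0 : ∀ k, d k ≠ 0)
    (w : Fin (2 * n) → ℂ) (hw : ∀ i, w i ≠ 0)
    (V : Matrix (Fin (2 * n)) (Fin n) ℂ)
    (hVdef : ∀ j : Fin n, (fun i => V i j) = ((Matrix.diagonal d) ^ (j : ℕ)).mulVec w) :
    V.rank = n := by
  have hV : ∀ i j, V i j = w i * d i ^ (j : ℕ) := fun i j => by
    have h := congrFun (hVdef j) i
    simp only [Matrix.diagonal_pow, Matrix.mulVec_diagonal, Pi.pow_apply] at h
    rw [h, mul_comm]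
  -- `r` selects the first `n` rows.
  let r : Fin n → Fin (2 * n) := Fin.castLE (by omega)
  have hr : Function.Injective r := Fin.castLE_injective _
  have hblock : V.submatrix r id =
      Matrix.diagonal (w ∘ r) * Matrix.vandermonde (d ∘ r) := by
    ext i j
    simp [Matrix.diagonal_mul, Matrix.vandermonde_apply, hV]
  have hunit : IsUnit (V.submatrix r id) := by
    rw [Matrix.isUnit_iff_isUnit_det, isUnit_iff_ne_zero, hblock, Matrix.det_mul,
      Matrix.det_diagonal]
    exact mul_ne_zero (Finset.prod_ne_zero_iff.mpr fun i _ => hw (r i))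
      (Matrix.det_vandermonde_ne_zero_iff.mpr (hd.comp hr))
  have hrank : (V.submatrix r id).rank = n := by
    rw [Matrix.rank_of_isUnit _ hunit, Fintype.card_fin]
  apply le_antisymm
  · simpa using V.rank_le_card_width
  · exact hrank.symm.le.trans (V.rank_submatrix_le r id)
end
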